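/- arXiv:1010.4158 — 2 statements merged into one kernel-verified Lean document; each statement's English description precedes it below -/
import Mathlib

section
/- Let 0<p,q≤∞ and 0<p₀<p<p₁≤∞. There are constants C₁,C₂>0, depending only on p,q,p₀,p₁, such that for every Schwartz function f on ℝ, defining for each n∈ℤ the function aₙ(u)=f(n+u) for u∈[−1/2,1/2), one has C₁‖(‖aₙ‖_{L^{p₀}(𝕋)})_{n∈ℤ}‖_{ℓ^{p,q}(ℤ)} ≤ ‖f‖_{L^{p,q}(ℝ)} ≤ C₂‖(‖aₙ‖_{L^{p₁}(𝕋)})_{n∈ℤ}‖_{ℓ^{p,q}(ℤ)}. -/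
open MeasureTheory Complex SchwartzMap Filter
open scoped FourierTransform ENNReal NNReal Real

/-- The distribution function of an `ℝ≥0∞`-valued function. -/
noncomputable def distFn {X : Type*} [MeasurableSpace X] (μ : Measure X)
    (f : X → ℝ≥0∞) (t : ℝ) : ℝ≥0∞ :=
  μ {x | ENNReal.ofReal t < f x}

/-- The Lorentz `L^{p,q}` quasinorm, defined via the distribution function. -/
noncomputable def lorentzNorm {X : Type*} [MeasurableSpace X] (μ : Measure X)
    (p q : ℝ≥0∞) (f : X → ℝ≥0∞) : ℝ≥0∞ :=
  if q = ∞ then ⨆ t ∈ Set.Ioi (0 : ℝ), ENNReal.ofReal t * distFn μ f t ^ (1 / p.toReal)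
  else (q * ∫⁻ t in Set.Ioi (0 : ℝ),
      ENNReal.ofReal (t ^ (q.toReal - 1)) * distFn μ f t ^ (q.toReal / p.toReal)) ^ (1 / q.toReal)

/-- The Lorentz `L^{p,q}` quasinorm of a complex-valued function. -/
noncomputable def lorentzNormC {X : Type*} [MeasurableSpace X] (μ : Measure X)
    (p q : ℝ≥0∞) (f : X → ℂ) : ℝ≥0∞ :=
  lorentzNorm μ p q fun x => (‖f x‖₊ : ℝ≥0∞)

/-- A function is locally bounded if it is bounded on every compact set. -/
def LocallyBounded (m : ℝ × ℝ → ℂ) : Prop :=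
  ∀ K : Set (ℝ × ℝ), IsCompact K → ∃ C : ℝ, ∀ z ∈ K, ‖m z‖ ≤ C

/-- The bilinear multiplier operator `C_m`. -/
noncomputable def Cm (m : ℝ × ℝ → ℂ) (f g : 𝓢(ℝ, ℂ)) (x : ℝ) : ℂ :=
  ∫ ξ : ℝ, ∫ η : ℝ, 𝓕 (f : ℝ → ℂ) ξ * 𝓕 (g : ℝ → ℂ) η * m (ξ, η) *
    Complex.exp (2 * Real.pi * Complex.I * (x : ℂ) * ((ξ : ℂ) + (η : ℂ)))

/-- The trigonometric polynomial with coefficients `a`. -/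
noncomputable def trigP (a : ℤ → ℂ) (ξ : ℝ) : ℂ :=
  ∑ᶠ k : ℤ, a k * Complex.exp (-(2 * Real.pi) * Complex.I * (k : ℂ) * (ξ : ℂ))

/-- The discrete bilinear operator `D_{m̃_{t,p}}`. -/
noncomputable def Dop (m : ℝ × ℝ → ℂ) (t p : ℝ) (a b : ℤ → ℂ) (n : ℤ) : ℂ :=
  ((t ^ (1 / p) : ℝ) : ℂ) *
    ∫ ξ in Set.Icc (-(1/2) : ℝ) (1/2), ∫ η in Set.Icc (-(1/2) : ℝ) (1/2),
      trigP a ξ * trigP b η * m (t * ξ, t * η) *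
        Complex.exp (2 * Real.pi * Complex.I * (n : ℂ) * ((ξ : ℂ) + (η : ℂ)))

/-- `InER R f` : `f` is (a representative of) a tempered distribution of exponential type,
i.e. a continuous function of polynomial growth whose distributional Fourier transform is
supported in `[-R, R]`. -/
def InER (R : ℝ) (f : ℝ → ℂ) : Prop :=
  Continuous f ∧ (∃ (C : ℝ) (k : ℕ), ∀ x : ℝ, ‖f x‖ ≤ C * (1 + |x|) ^ k) ∧
  ∀ φ : 𝓢(ℝ, ℂ), Disjoint (tsupport (φ : ℝ → ℂ)) (Set.Icc (-R) R) →
    ∫ x : ℝ, f x * 𝓕 (φ : ℝ → ℂ) x = 0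

/-- The discrete bilinear Hilbert transform. -/
noncomputable def bhtZ (α : ℤ) (a b : ℤ → ℂ) (n : ℤ) : ℂ :=
  ((Real.pi : ℂ))⁻¹ * ∑ᶠ (k : ℤ) (_ : k ≠ 0), a (n - k) * b (n - α * k) * (k : ℂ)⁻¹

/-- `sinc x = sin (π x) / (π x)`, with `sinc 0 = 1`. -/
noncomputable def mySinc (x : ℝ) : ℝ :=
  if x = 0 then 1 else Real.sin (Real.pi * x) / (Real.pi * x)

/-!
The map `(n, u) ↦ n + u` identifies `ℝ` with the product of `ℤ` and a probability space, so it
suffices to compare the Lorentz norm of `f` on a product `X × Y`, `ν Y = 1`, with that of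
`A x = ‖f (x, ·)‖_{L^r(ν)}` on `X`. Layer cake when `r < p`, and Chebyshev's inequality together
with `ν Y = 1` when `r > p`, both followed by a dyadic decomposition, bound one distribution
function by a sum of dilates of the other:
`d_A (2 ^ (1 / r) t) ≤ 2 ^ r ∑ₖ 2 ^ (k r) d_f (2 ^ k t)` and
`d_f t ≤ 2 ^ r ∑ₖ 2 ^ (-k r) d_A (2 ^ (-k) t)`.
The dilate `t ↦ a ^ p D (a t)` has the same Lorentz `L^{p,q}` functional as `D`, so in both sums the
`k`-th term carries a geometrically decaying factor, `2 ^ (k (r - p))` or `2 ^ (k (p - r))`, which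
makes the sums bounded by a single term.
-/

section Dyadic

variable {t r : ℝ}

lemma rpow_le_add_tsum_indicator_Ioi (ht : 0 < t) (hr : 0 < r) (x : ℝ≥0∞) :
    x ^ r ≤ ENNReal.ofReal t ^ r + ENNReal.ofReal (2 * t) ^ r * ∑' k : ℕ,
      ENNReal.ofReal (2 ^ k) ^ r * (Set.Ioi (ENNReal.ofReal (2 ^ k * t))).indicator 1 x := by
  by_cases h₀ : x ≤ ENNReal.ofReal t
  · exact (ENNReal.rpow_le_rpow h₀ hr.le).trans le_self_add
  refine le_trans ?_ le_add_self
  by_cases hx : x = ∞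
  · have h_term (k : ℕ) : 1 ≤ ENNReal.ofReal (2 ^ k) ^ r *
        (Set.Ioi (ENNReal.ofReal (2 ^ k * t))).indicator 1 x := by
      rw [Set.indicator_of_mem (by simp [hx, ENNReal.mul_lt_top]), Pi.one_apply, mul_one]
      exact ENNReal.one_le_rpow (ENNReal.one_le_ofReal.2 (one_le_pow₀ one_le_two)) hr
    have h_sum : ∑' k : ℕ, ENNReal.ofReal (2 ^ k) ^ r *
        (Set.Ioi (ENNReal.ofReal (2 ^ k * t))).indicator 1 x = ∞ :=
      top_unique ((ENNReal.tsum_const_eq_top_of_ne_zero one_ne_zero).symm.trans_le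
        (ENNReal.tsum_le_tsum h_term))
    rw [h_sum, ENNReal.mul_top (by simp [ht, hr.le])]
    exact le_top
  have h_ex : ∃ k : ℕ, x ≤ ENNReal.ofReal (2 ^ k * t) := by
    obtain ⟨k, hk⟩ := pow_unbounded_of_one_lt (x.toReal / t) one_lt_two
    exact ⟨k, (ENNReal.le_ofReal_iff_toReal_le hx (by positivity)).2 ((div_lt_iff₀ ht).1 hk).le⟩
  obtain ⟨k, hk, hk'⟩ := Nat.exists_not_and_succ_of_not_zero_of_exists (by simpa using h₀) h_ex
  calc x ^ r ≤ ENNReal.ofReal (2 ^ (k + 1) * t) ^ r := ENNReal.rpow_le_rpow hk' hr.le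
    _ = ENNReal.ofReal (2 * t) ^ r * (ENNReal.ofReal (2 ^ k) ^ r *
        (Set.Ioi (ENNReal.ofReal (2 ^ k * t))).indicator 1 x) := by
      rw [Set.indicator_of_mem (Set.mem_Ioi.2 (not_le.1 hk)), Pi.one_apply, mul_one,
        ← ENNReal.mul_rpow_of_nonneg _ _ hr.le, ← ENNReal.ofReal_mul (by positivity), pow_succ]
      ring_nf
    _ ≤ _ := by gcongr; exact ENNReal.le_tsum k

lemma min_one_div_rpow_le_tsum_indicator_Ioi (t : ℝ) (hr : 0 < r) (x : ℝ≥0∞) :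
    min 1 ((x / ENNReal.ofReal t) ^ r) ≤ 2 ^ r * ∑' k : ℕ, ENNReal.ofReal ((1 / 2) ^ k) ^ r *
      (Set.Ioi (ENNReal.ofReal ((1 / 2) ^ k * t))).indicator 1 x := by
  by_cases h₀ : ENNReal.ofReal t < x
  · calc min 1 ((x / ENNReal.ofReal t) ^ r) ≤ 2 ^ r * 1 := by
          rw [mul_one]
          exact (min_le_left _ _).trans (ENNReal.one_le_rpow one_le_two hr)
      _ ≤ _ := by
          gcongr
          exact le_of_eq_of_le (by simp [h₀]) (ENNReal.le_tsum 0)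
  obtain rfl | hx := eq_or_ne x 0
  · simp [hr]
  have h_ex : ∃ k : ℕ, ENNReal.ofReal ((1 / 2) ^ k * t) < x := by
    have h_lim : Tendsto (fun k : ℕ => ENNReal.ofReal ((1 / 2) ^ k * t)) atTop (nhds 0) := by
      simpa using ENNReal.tendsto_ofReal ((tendsto_pow_atTop_nhds_zero_of_lt_one
        (r := (1 / 2 : ℝ)) (by norm_num) (by norm_num)).mul_const t)
    exact (h_lim.eventually (gt_mem_nhds hx.bot_lt)).exists
  obtain ⟨k, hk, hk'⟩ := Nat.exists_not_and_succ_of_not_zero_of_exists (by simpa using h₀) h_ex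
  have h_div : x / ENNReal.ofReal t ≤ ENNReal.ofReal ((1 / 2) ^ k) := by
    refine ENNReal.div_le_of_le_mul ?_
    rw [← ENNReal.ofReal_mul (by positivity)]
    exact not_lt.1 hk
  calc min 1 ((x / ENNReal.ofReal t) ^ r) ≤ ENNReal.ofReal ((1 / 2) ^ k) ^ r :=
        (min_le_right _ _).trans (ENNReal.rpow_le_rpow h_div hr.le)
    _ = 2 ^ r * (ENNReal.ofReal ((1 / 2) ^ (k + 1)) ^ r *
        (Set.Ioi (ENNReal.ofReal ((1 / 2) ^ (k + 1) * t))).indicator 1 x) := by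
      rw [Set.indicator_of_mem (Set.mem_Ioi.2 hk'), Pi.one_apply, mul_one,
        ← ENNReal.mul_rpow_of_nonneg _ _ hr.le, ← ENNReal.ofReal_ofNat 2,
        ← ENNReal.ofReal_mul zero_le_two, pow_succ]
      ring_nf
    _ ≤ _ := by gcongr; exact ENNReal.le_tsum (k + 1)

end Dyadic

section DistFn

variable {X Y : Type*} [MeasurableSpace X] [MeasurableSpace Y] {μ : Measure X} {ν : Measure Y}
  {F G : X → ℝ≥0∞}

lemma distFn_antitone (μ : Measure X) (F : X → ℝ≥0∞) : Antitone (distFn μ F) := fun _ _ hst =>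
  measure_mono fun _ (hx : _ < _) => (ENNReal.ofReal_le_ofReal hst).trans_lt hx

lemma distFn_mono_ae (h : ∀ᵐ x ∂μ, F x ≤ G x) (t : ℝ) : distFn μ F t ≤ distFn μ G t :=
  measure_mono_ae <| h.mono fun _ hx (hF : _ < _) => hF.trans_le hx

lemma distFn_comp_measurePreserving {φ : Y → X} (hφ : MeasurePreserving φ ν μ)
    (hF : AEMeasurable F μ) (t : ℝ) : distFn ν (F ∘ φ) t = distFn μ F t :=
  hφ.measure_preimage (nullMeasurableSet_lt aemeasurable_const hF)

lemma aemeasurable_indicator_Ioi_comp (hF : AEMeasurable F μ) (t : ℝ) : AEMeasurable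
    (fun x => (Set.Ioi (ENNReal.ofReal t)).indicator (1 : ℝ≥0∞ → ℝ≥0∞) (F x)) μ :=
  (measurable_one.indicator measurableSet_Ioi).comp_aemeasurable hF

lemma lintegral_indicator_Ioi_comp (hF : AEMeasurable F μ) (t : ℝ) :
    ∫⁻ x, (Set.Ioi (ENNReal.ofReal t)).indicator 1 (F x) ∂μ = distFn μ F t :=
  lintegral_indicator_one₀ (nullMeasurableSet_lt aemeasurable_const hF)

lemma lintegral_tsum_mul_indicator_Ioi_comp (hF : AEMeasurable F μ) (c : ℕ → ℝ≥0∞) (s : ℕ → ℝ) :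
    ∫⁻ x, ∑' k, c k * (Set.Ioi (ENNReal.ofReal (s k))).indicator 1 (F x) ∂μ =
      ∑' k, c k * distFn μ F (s k) := by
  have h_meas (k : ℕ) := aemeasurable_indicator_Ioi_comp hF (s k)
  rw [lintegral_tsum fun k => (h_meas k).const_mul _]
  congr with k
  rw [lintegral_const_mul'' _ (h_meas k), lintegral_indicator_Ioi_comp hF]

section Prod

variable [SFinite ν] {H : X × Y → ℝ≥0∞}

lemma distFn_prodMk_left_ae_eq (hH : AEMeasurable H (μ.prod ν)) (t : ℝ) :
    (fun x => ∫⁻ y, (Set.Ioi (ENNReal.ofReal t)).indicator 1 (H (x, y)) ∂ν) =ᵐ[μ]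
      fun x => distFn ν (fun y => H (x, y)) t := by
  filter_upwards [hH.aestronglyMeasurable.prodMk_left] with x hx
  exact lintegral_indicator_Ioi_comp hx.aemeasurable t

lemma aemeasurable_distFn_prodMk_left (hH : AEMeasurable H (μ.prod ν)) (t : ℝ) :
    AEMeasurable (fun x => distFn ν (fun y => H (x, y)) t) μ :=
  (aemeasurable_indicator_Ioi_comp hH t).lintegral_prod_right'.congr
    (distFn_prodMk_left_ae_eq hH t)

lemma distFn_prod (hH : AEMeasurable H (μ.prod ν)) (t : ℝ) :
    distFn (μ.prod ν) H t = ∫⁻ x, distFn ν (fun y => H (x, y)) t ∂μ := by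
  rw [← lintegral_indicator_Ioi_comp hH,
    lintegral_prod _ (aemeasurable_indicator_Ioi_comp hH t)]
  exact lintegral_congr_ae (distFn_prodMk_left_ae_eq hH t)

end Prod

end DistFn

section LpSlices

variable {X Y E : Type*} [MeasurableSpace X] [MeasurableSpace Y] {μ : Measure X} {ν : Measure Y}
  [TopologicalSpace E] [ContinuousENorm E] {r : ℝ≥0∞} {t : ℝ}

lemma lintegral_rpow_le_add_tsum_distFn [IsProbabilityMeasure μ] {F : X → ℝ≥0∞}
    (hF : AEMeasurable F μ) {r : ℝ} (hr : 0 < r) (ht : 0 < t) :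
    ∫⁻ x, F x ^ r ∂μ ≤ ENNReal.ofReal t ^ r + ENNReal.ofReal (2 * t) ^ r *
      ∑' k : ℕ, ENNReal.ofReal (2 ^ k) ^ r * distFn μ F (2 ^ k * t) := by
  refine (lintegral_mono fun x => rpow_le_add_tsum_indicator_Ioi ht hr (F x)).trans_eq ?_
  have h_ne_top : ENNReal.ofReal (2 * t) ^ r ≠ ∞ :=
    ENNReal.rpow_ne_top_of_nonneg hr.le ENNReal.ofReal_ne_top
  rw [lintegral_add_left measurable_const, lintegral_const, measure_univ, mul_one,
    lintegral_const_mul' _ _ h_ne_top, lintegral_tsum_mul_indicator_Ioi_comp hF]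

lemma one_le_tsum_distFn_of_lt_eLpNorm [IsProbabilityMeasure ν] {g : Y → E}
    (hg : AEStronglyMeasurable g ν) (hr₀ : r ≠ 0) (hr : r ≠ ∞) (ht : 0 < t)
    (h : ENNReal.ofReal (2 ^ r.toReal⁻¹ * t) < eLpNorm g r ν) :
    1 ≤ 2 ^ r.toReal * ∑' k : ℕ, ENNReal.ofReal (2 ^ k) ^ r.toReal *
      distFn ν (fun y => ‖g y‖ₑ) (2 ^ k * t) := by
  have hr' : 0 < r.toReal := ENNReal.toReal_pos hr₀ hr
  set S := ∑' k : ℕ, ENNReal.ofReal (2 ^ k) ^ r.toReal * distFn ν (fun y => ‖g y‖ₑ) (2 ^ k * t)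
  set T := ENNReal.ofReal t ^ r.toReal with hT
  have hT_ne_zero : T ≠ 0 := by simp [hT, ENNReal.rpow_eq_zero_iff, ht]
  have hT_ne_top : T ≠ ∞ := ENNReal.rpow_ne_top_of_nonneg hr'.le ENNReal.ofReal_ne_top
  have h_lower : T + T < ∫⁻ y, ‖g y‖ₑ ^ r.toReal ∂ν := by
    rw [eLpNorm_eq_lintegral_rpow_enorm_toReal hr₀ hr, one_div, ENNReal.lt_rpow_inv_iff hr',
      ENNReal.ofReal_mul (by positivity), ENNReal.mul_rpow_of_nonneg _ _ hr'.le,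
      ENNReal.ofReal_rpow_of_nonneg (by positivity) hr'.le,
      Real.rpow_inv_rpow zero_le_two hr'.ne', ENNReal.ofReal_ofNat, two_mul] at h
    exact h
  have h_upper : ∫⁻ y, ‖g y‖ₑ ^ r.toReal ∂ν ≤ T + T * (2 ^ r.toReal * S) := by
    refine (lintegral_rpow_le_add_tsum_distFn hg.enorm hr' ht).trans_eq ?_
    rw [ENNReal.ofReal_mul zero_le_two, ENNReal.mul_rpow_of_nonneg _ _ hr'.le,
      ENNReal.ofReal_ofNat, mul_comm (2 ^ r.toReal) (ENNReal.ofReal t ^ r.toReal), mul_assoc]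
  have h_cancel : T * 1 ≤ T * (2 ^ r.toReal * S) := by
    rw [mul_one]
    exact (ENNReal.add_le_add_iff_left hT_ne_top).1 (h_lower.le.trans h_upper)
  exact (ENNReal.mul_le_mul_iff_right hT_ne_zero hT_ne_top).1 h_cancel

lemma distFn_enorm_le_min [IsProbabilityMeasure ν] {g : Y → E} (hg : AEStronglyMeasurable g ν)
    (hr₀ : r ≠ 0) (hr : r ≠ ∞) (ht : 0 < t) :
    distFn ν (fun y => ‖g y‖ₑ) t ≤
      min 1 ((eLpNorm g r ν / ENNReal.ofReal t) ^ r.toReal) := by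
  refine le_min prob_le_one ?_
  rw [ENNReal.div_eq_inv_mul, ENNReal.mul_rpow_of_nonneg _ _ ENNReal.toReal_nonneg]
  refine (measure_mono ?_).trans
    (meas_ge_le_mul_pow_eLpNorm_enorm ν hr₀ hr hg (ENNReal.ofReal_pos.2 ht).ne' (by simp))
  intro y hy
  rw [Set.mem_ofPred_eq] at hy ⊢
  exact hy.le

lemma aemeasurable_eLpNorm_prodMk_left [SFinite ν] {f : X × Y → E}
    (hf : AEStronglyMeasurable f (μ.prod ν)) (hr₀ : r ≠ 0) (hr : r ≠ ∞) :
    AEMeasurable (fun x => eLpNorm (fun y => f (x, y)) r ν) μ := by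
  simp only [eLpNorm_eq_lintegral_rpow_enorm_toReal hr₀ hr]
  exact (hf.enorm.pow_const _).lintegral_prod_right'.pow_const _

variable [IsProbabilityMeasure ν] {f : X × Y → E}

lemma distFn_eLpNorm_prodMk_left_le (hf : AEStronglyMeasurable f (μ.prod ν)) (hr₀ : r ≠ 0)
    (hr : r ≠ ∞) (ht : 0 < t) :
    distFn μ (fun x => eLpNorm (fun y => f (x, y)) r ν) (2 ^ r.toReal⁻¹ * t) ≤
      2 ^ r.toReal * ∑' k : ℕ, ENNReal.ofReal (2 ^ k) ^ r.toReal *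
        distFn (μ.prod ν) (fun z => ‖f z‖ₑ) (2 ^ k * t) := by
  have h_const : (2 : ℝ≥0∞) ^ r.toReal ≠ ∞ :=
    ENNReal.rpow_ne_top_of_nonneg ENNReal.toReal_nonneg ENNReal.ofNat_ne_top
  have h_meas (k : ℕ) := aemeasurable_distFn_prodMk_left hf.enorm (2 ^ k * t)
  calc distFn μ (fun x => eLpNorm (fun y => f (x, y)) r ν) (2 ^ r.toReal⁻¹ * t)
      = ∫⁻ x, (Set.Ioi (ENNReal.ofReal (2 ^ r.toReal⁻¹ * t))).indicator 1
          (eLpNorm (fun y => f (x, y)) r ν) ∂μ :=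
        (lintegral_indicator_Ioi_comp (aemeasurable_eLpNorm_prodMk_left hf hr₀ hr) _).symm
    _ ≤ ∫⁻ x, 2 ^ r.toReal * ∑' k : ℕ, ENNReal.ofReal (2 ^ k) ^ r.toReal *
          distFn ν (fun y => ‖f (x, y)‖ₑ) (2 ^ k * t) ∂μ := by
        refine lintegral_mono_ae (hf.prodMk_left.mono fun x hx => ?_)
        exact Set.indicator_apply_le' (one_le_tsum_distFn_of_lt_eLpNorm hx hr₀ hr ht)
          fun _ => zero_le
    _ = _ := by
        rw [lintegral_const_mul' _ _ h_const, lintegral_tsum fun k => (h_meas k).const_mul _]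
        congr with k
        rw [lintegral_const_mul'' _ (h_meas k), distFn_prod hf.enorm]

lemma distFn_prod_le_tsum_distFn_eLpNorm (hf : AEStronglyMeasurable f (μ.prod ν)) (hr₀ : r ≠ 0)
    (hr : r ≠ ∞) (ht : 0 < t) :
    distFn (μ.prod ν) (fun z => ‖f z‖ₑ) t ≤
      2 ^ r.toReal * ∑' k : ℕ, ENNReal.ofReal ((1 / 2) ^ k) ^ r.toReal *
        distFn μ (fun x => eLpNorm (fun y => f (x, y)) r ν) ((1 / 2) ^ k * t) := by
  have h_const : (2 : ℝ≥0∞) ^ r.toReal ≠ ∞ :=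
    ENNReal.rpow_ne_top_of_nonneg ENNReal.toReal_nonneg ENNReal.ofNat_ne_top
  rw [distFn_prod hf.enorm,
    ← lintegral_tsum_mul_indicator_Ioi_comp (aemeasurable_eLpNorm_prodMk_left hf hr₀ hr),
    ← lintegral_const_mul' _ _ h_const]
  refine lintegral_mono_ae (hf.prodMk_left.mono fun x hx => ?_)
  exact (distFn_enorm_le_min hx hr₀ hr ht).trans
    (min_one_div_rpow_le_tsum_indicator_Ioi t (ENNReal.toReal_pos hr₀ hr) _)

end LpSlices

section LorentzGauge

/-- The functional of a distribution function `D` that defines the Lorentz quasinorm. Separating it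
from the underlying function lets `lorentzNorm`s over different measure spaces be compared through
inequalities between their distribution functions. -/
noncomputable def lorentzGauge (p q : ℝ≥0∞) (D : ℝ → ℝ≥0∞) : ℝ≥0∞ :=
  if q = ∞ then ⨆ t ∈ Set.Ioi (0 : ℝ), ENNReal.ofReal t * D t ^ (1 / p.toReal)
  else (q * ∫⁻ t in Set.Ioi (0 : ℝ),
      ENNReal.ofReal (t ^ (q.toReal - 1)) * D t ^ (q.toReal / p.toReal)) ^ (1 / q.toReal)

lemma lorentzNorm_eq_lorentzGauge {X : Type*} [MeasurableSpace X] (μ : Measure X) (p q : ℝ≥0∞)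
    (F : X → ℝ≥0∞) : lorentzNorm μ p q F = lorentzGauge p q (distFn μ F) := rfl

lemma lorentzGauge_top (p : ℝ≥0∞) (D : ℝ → ℝ≥0∞) : lorentzGauge p ∞ D =
    ⨆ t ∈ Set.Ioi (0 : ℝ), ENNReal.ofReal t * D t ^ (1 / p.toReal) :=
  if_pos rfl

variable {p q : ℝ≥0∞} {D E : ℝ → ℝ≥0∞}

lemma lorentzGauge_of_ne_top (hq : q ≠ ∞) : lorentzGauge p q D =
    (q * ∫⁻ t in Set.Ioi (0 : ℝ),
      ENNReal.ofReal (t ^ (q.toReal - 1)) * D t ^ (q.toReal / p.toReal)) ^ (1 / q.toReal) :=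
  if_neg hq

lemma lorentzGauge_mono (h : ∀ t, 0 < t → D t ≤ E t) :
    lorentzGauge p q D ≤ lorentzGauge p q E := by
  obtain rfl | hq := eq_or_ne q ∞
  · simp only [lorentzGauge_top]
    gcongr with t ht
    exact h t ht
  · simp only [lorentzGauge_of_ne_top hq]
    gcongr ?_ ^ _
    gcongr q * ?_
    refine setLIntegral_mono' measurableSet_Ioi fun t ht => ?_
    gcongr
    exact h t ht

lemma lorentzGauge_const_mul (hq₀ : q ≠ 0) {c : ℝ≥0∞} (hc : c ≠ ∞) :
    lorentzGauge p q (fun t => c * D t) = c ^ (1 / p.toReal) * lorentzGauge p q D := by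
  obtain rfl | hq := eq_or_ne q ∞
  · simp only [lorentzGauge_top, ENNReal.mul_iSup]
    congr with t
    congr with _
    rw [ENNReal.mul_rpow_of_nonneg _ _ (by positivity), mul_left_comm]
  · have hq' : 0 < q.toReal := ENNReal.toReal_pos hq₀ hq
    have h_const : c ^ (q.toReal / p.toReal) ≠ ∞ :=
      ENNReal.rpow_ne_top_of_nonneg (by positivity) hc
    have h_exp : c ^ (1 / p.toReal) = (c ^ (q.toReal / p.toReal)) ^ (1 / q.toReal) := by
      rw [← ENNReal.rpow_mul]
      congr 1
      field_simp
    simp only [lorentzGauge_of_ne_top hq]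
    rw [h_exp, ← ENNReal.mul_rpow_of_nonneg _ _ (by positivity), mul_left_comm,
      ← lintegral_const_mul' _ _ h_const]
    congr with t
    rw [ENNReal.mul_rpow_of_nonneg _ _ (by positivity), mul_left_comm]

lemma ofReal_mul_lintegral_Ioi_comp_mul_left (φ : ℝ → ℝ≥0∞) {a : ℝ} (ha : 0 < a) :
    ENNReal.ofReal a * ∫⁻ t in Set.Ioi (0 : ℝ), φ (a * t) = ∫⁻ t in Set.Ioi (0 : ℝ), φ t := by
  have h := lintegral_image_eq_lintegral_abs_deriv_mul (s := Set.Ioi (0 : ℝ)) (f := fun t => a * t)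
    (f' := fun _ => a) measurableSet_Ioi
    (fun x _ => by simpa using ((hasDerivAt_id x).const_mul a).hasDerivWithinAt)
    (mul_right_injective₀ ha.ne').injOn φ
  rw [Set.image_mul_left_Ioi ha, mul_zero, abs_of_pos ha,
    lintegral_const_mul' _ _ ENNReal.ofReal_ne_top] at h
  exact h.symm

lemma ofReal_mul_lorentzGauge_comp_mul_left (hq₀ : q ≠ 0) {a : ℝ} (ha : 0 < a) :
    ENNReal.ofReal a * lorentzGauge p q (fun t => D (a * t)) = lorentzGauge p q D := by
  obtain rfl | hq := eq_or_ne q ∞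
  · simp only [lorentzGauge_top, ENNReal.mul_iSup, ← mul_assoc, ← ENNReal.ofReal_mul ha.le]
    refine le_antisymm (iSup₂_le fun t ht => ?_) (iSup₂_le fun t ht => ?_)
    · exact le_iSup₂_of_le (a * t) (mul_pos ha ht) le_rfl
    · exact le_iSup₂_of_le (a⁻¹ * t) (mul_pos (inv_pos.2 ha) ht)
        (by rw [mul_inv_cancel_left₀ ha.ne'])
  · have hq' : 0 < q.toReal := ENNReal.toReal_pos hq₀ hq
    have h_exp : ENNReal.ofReal a = (ENNReal.ofReal a ^ q.toReal) ^ (1 / q.toReal) := by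
      rw [one_div, ENNReal.rpow_rpow_inv hq'.ne']
    have h_scale : ENNReal.ofReal a ^ q.toReal * ∫⁻ t in Set.Ioi (0 : ℝ),
          ENNReal.ofReal (t ^ (q.toReal - 1)) * D (a * t) ^ (q.toReal / p.toReal) =
        ∫⁻ t in Set.Ioi (0 : ℝ), ENNReal.ofReal (t ^ (q.toReal - 1)) *
          D t ^ (q.toReal / p.toReal) := by
      have h_split : ENNReal.ofReal a ^ q.toReal =
          ENNReal.ofReal a * ENNReal.ofReal (a ^ (q.toReal - 1)) := by
        rw [ENNReal.ofReal_rpow_of_pos ha, ← ENNReal.ofReal_mul ha.le, Real.rpow_sub_one ha.ne',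
          mul_div_cancel₀ _ ha.ne']
      refine .trans ?_ (ofReal_mul_lintegral_Ioi_comp_mul_left _ ha)
      rw [h_split, mul_assoc, ← lintegral_const_mul' _ _ ENNReal.ofReal_ne_top]
      congr 1
      refine setLIntegral_congr_fun measurableSet_Ioi fun t (ht : 0 < t) => ?_
      rw [Real.mul_rpow ha.le ht.le, ENNReal.ofReal_mul (by positivity), mul_assoc]
    simp only [lorentzGauge_of_ne_top hq]
    rw [h_exp, ← ENNReal.mul_rpow_of_nonneg _ _ (by positivity), mul_left_comm, h_scale]

lemma inv_one_sub_ne_top {ρ : ℝ≥0∞} (hρ : ρ < 1) : (1 - ρ)⁻¹ ≠ ∞ :=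
  ENNReal.inv_ne_top.2 (tsub_pos_of_lt hρ).ne'

lemma tsum_geometric_mul_le (ρ : ℝ≥0∞) (h : ℕ → ℝ≥0∞) :
    ∑' k, ρ ^ k * h k ≤ (1 - ρ)⁻¹ * ⨆ k, h k := by
  rw [← ENNReal.tsum_geometric, ← ENNReal.tsum_mul_right]
  exact ENNReal.tsum_le_tsum fun k => by gcongr; exact le_iSup h k

lemma iSup_rpow_le_tsum_rpow {ι : Type*} (h : ι → ℝ≥0∞) {a : ℝ} (ha : 0 < a) :
    (⨆ i, h i) ^ a ≤ ∑' i, h i ^ a := by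
  rw [← ENNReal.orderIsoRpow_apply a ha, OrderIso.map_iSup]
  exact iSup_le fun i => ENNReal.le_tsum (f := fun i => h i ^ a) i

lemma lorentzGauge_top_iSup_le (hp₀ : p ≠ 0) (hp : p ≠ ∞) {ι : Type*} (E : ι → ℝ → ℝ≥0∞) :
    lorentzGauge p ∞ (fun t => ⨆ i, E i t) ≤ ⨆ i, lorentzGauge p ∞ (E i) := by
  have h_exp : 0 < 1 / p.toReal := one_div_pos.2 (ENNReal.toReal_pos hp₀ hp)
  simp only [lorentzGauge_top]
  refine iSup₂_le fun t ht => ?_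
  rw [← ENNReal.orderIsoRpow_apply _ h_exp, OrderIso.map_iSup, ENNReal.mul_iSup]
  exact iSup_mono fun i => le_iSup₂_of_le t ht le_rfl

lemma lorentzGauge_iSup_rpow_le (hp₀ : p ≠ 0) (hp : p ≠ ∞) (hq₀ : q ≠ 0) (hq : q ≠ ∞)
    {ι : Type*} [Countable ι] {E : ι → ℝ → ℝ≥0∞} (hE : ∀ i, Measurable (E i)) :
    lorentzGauge p q (fun t => ⨆ i, E i t) ^ q.toReal ≤
      ∑' i, lorentzGauge p q (E i) ^ q.toReal := by
  have hp' : 0 < p.toReal := ENNReal.toReal_pos hp₀ hp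
  have hq' : 0 < q.toReal := ENNReal.toReal_pos hq₀ hq
  simp only [lorentzGauge_of_ne_top hq, one_div, ENNReal.rpow_inv_rpow hq'.ne',
    ENNReal.tsum_mul_left]
  gcongr
  rw [← lintegral_tsum fun i => by fun_prop]
  gcongr with t
  rw [ENNReal.tsum_mul_left]
  gcongr
  exact iSup_rpow_le_tsum_rpow _ (by positivity)

lemma exists_lorentzGauge_iSup_geometric_le (hp₀ : p ≠ 0) (hp : p ≠ ∞) (hq₀ : q ≠ 0)
    {ρ : ℝ≥0∞} (hρ : ρ < 1) :
    ∃ C : ℝ≥0∞, C ≠ ∞ ∧ ∀ E : ℕ → ℝ → ℝ≥0∞, (∀ k, Measurable (E k)) →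
      lorentzGauge p q (fun t => ⨆ k, ρ ^ k * E k t) ≤ C * ⨆ k, lorentzGauge p q (E k) := by
  have hp' : 0 < p.toReal := ENNReal.toReal_pos hp₀ hp
  obtain rfl | hq := eq_or_ne q ∞
  · refine ⟨1, ENNReal.one_ne_top, fun E _ => ?_⟩
    rw [one_mul]
    refine (lorentzGauge_top_iSup_le hp₀ hp _).trans
      (iSup_mono fun k => lorentzGauge_mono fun t _ => ?_)
    exact mul_le_of_le_one_left' (pow_le_one' hρ.le k)
  have hq' : 0 < q.toReal := ENNReal.toReal_pos hq₀ hq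
  set σ := ρ ^ (q.toReal / p.toReal)
  have hσ : σ < 1 := ENNReal.rpow_lt_one hρ (by positivity)
  refine ⟨(1 - σ)⁻¹ ^ q.toReal⁻¹, ENNReal.rpow_ne_top_of_nonneg (by positivity)
    (inv_one_sub_ne_top hσ), fun E hE => ?_⟩
  have h_term (k : ℕ) : lorentzGauge p q (fun t => ρ ^ k * E k t) ^ q.toReal =
      σ ^ k * lorentzGauge p q (E k) ^ q.toReal := by
    rw [lorentzGauge_const_mul hq₀ (ENNReal.pow_ne_top hρ.ne_top),
      ENNReal.mul_rpow_of_nonneg _ _ hq'.le]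
    congr 1
    simp only [σ, ← ENNReal.rpow_natCast, ← ENNReal.rpow_mul]
    ring_nf
  rw [← ENNReal.rpow_le_rpow_iff hq', ENNReal.mul_rpow_of_nonneg _ _ hq'.le,
    ENNReal.rpow_inv_rpow hq'.ne']
  calc lorentzGauge p q (fun t => ⨆ k, ρ ^ k * E k t) ^ q.toReal
      ≤ ∑' k, lorentzGauge p q (fun t => ρ ^ k * E k t) ^ q.toReal :=
        lorentzGauge_iSup_rpow_le hp₀ hp hq₀ hq fun k => (hE k).const_mul _
    _ = ∑' k, σ ^ k * lorentzGauge p q (E k) ^ q.toReal := by simp only [h_term]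
    _ ≤ (1 - σ)⁻¹ * ⨆ k, lorentzGauge p q (E k) ^ q.toReal := tsum_geometric_mul_le _ _
    _ = (1 - σ)⁻¹ * (⨆ k, lorentzGauge p q (E k)) ^ q.toReal := by
        simp only [← ENNReal.orderIsoRpow_apply q.toReal hq', OrderIso.map_iSup]

-- With `ρ = σ * σ`, one factor `σ ^ k` turns the sum into a supremum and the other makes the
-- `q`-th powers under that supremum summable; this treats all `q` alike, even where the gauge is
-- not subadditive.
lemma exists_lorentzGauge_tsum_geometric_le (hp₀ : p ≠ 0) (hp : p ≠ ∞) (hq₀ : q ≠ 0)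
    {ρ : ℝ≥0∞} (hρ : ρ < 1) :
    ∃ C : ℝ≥0∞, C ≠ ∞ ∧ ∀ E : ℕ → ℝ → ℝ≥0∞, (∀ k, Measurable (E k)) →
      lorentzGauge p q (fun t => ∑' k, ρ ^ k * E k t) ≤ C * ⨆ k, lorentzGauge p q (E k) := by
  set σ := ρ ^ (1 / 2 : ℝ)
  have hσ : σ < 1 := ENNReal.rpow_lt_one hρ (by norm_num)
  have hσρ : ρ = σ * σ := by
    rw [← ENNReal.rpow_add_of_nonneg _ _ (by norm_num) (by norm_num)]
    norm_num
  have h_const : (1 - σ)⁻¹ ≠ ∞ := inv_one_sub_ne_top hσ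
  obtain ⟨C, hC, h_iSup⟩ := exists_lorentzGauge_iSup_geometric_le hp₀ hp hq₀ hσ
  refine ⟨(1 - σ)⁻¹ ^ (1 / p.toReal) * C, ENNReal.mul_ne_top
    (ENNReal.rpow_ne_top_of_nonneg (by positivity) h_const) hC, fun E hE => ?_⟩
  calc lorentzGauge p q (fun t => ∑' k, ρ ^ k * E k t)
      ≤ lorentzGauge p q (fun t => (1 - σ)⁻¹ * ⨆ k, σ ^ k * E k t) := by
        refine lorentzGauge_mono fun t _ => ?_
        simp only [hσρ, mul_pow, mul_assoc]
        exact tsum_geometric_mul_le σ _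
    _ = (1 - σ)⁻¹ ^ (1 / p.toReal) * lorentzGauge p q (fun t => ⨆ k, σ ^ k * E k t) :=
        lorentzGauge_const_mul hq₀ h_const
    _ ≤ (1 - σ)⁻¹ ^ (1 / p.toReal) * C * ⨆ k, lorentzGauge p q (E k) := by
        rw [mul_assoc]
        gcongr
        exact h_iSup E hE

lemma lorentzGauge_rpow_mul_comp_mul_left (hp₀ : p ≠ 0) (hp : p ≠ ∞) (hq₀ : q ≠ 0) {a : ℝ}
    (ha : 0 < a) :
    lorentzGauge p q (fun t => ENNReal.ofReal a ^ p.toReal * D (a * t)) = lorentzGauge p q D := by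
  rw [lorentzGauge_const_mul hq₀ (ENNReal.rpow_ne_top_of_nonneg ENNReal.toReal_nonneg
    ENNReal.ofReal_ne_top), one_div, ENNReal.rpow_rpow_inv (ENNReal.toReal_pos hp₀ hp).ne',
    ofReal_mul_lorentzGauge_comp_mul_left hq₀ ha]

lemma exists_lorentzGauge_le_of_le_tsum_dilates (hp₀ : p ≠ 0) (hp : p ≠ ∞) (hq₀ : q ≠ 0)
    {K : ℝ≥0∞} (hK : K ≠ ∞) {a r : ℝ} (ha : 0 < a) (har : a ^ (r - p.toReal) < 1) :
    ∃ C : ℝ≥0∞, C ≠ ∞ ∧ ∀ D E : ℝ → ℝ≥0∞, Measurable E →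
      (∀ t, 0 < t → D t ≤ K * ∑' k : ℕ, ENNReal.ofReal (a ^ k) ^ r * E (a ^ k * t)) →
      lorentzGauge p q D ≤ C * lorentzGauge p q E := by
  set ρ := ENNReal.ofReal (a ^ (r - p.toReal))
  have hρ : ρ < 1 := ENNReal.ofReal_lt_one.2 har
  obtain ⟨C, hC, h_tsum⟩ := exists_lorentzGauge_tsum_geometric_le hp₀ hp hq₀ hρ
  refine ⟨K ^ (1 / p.toReal) * C, ENNReal.mul_ne_top
    (ENNReal.rpow_ne_top_of_nonneg (by positivity) hK) hC, fun D E hE h => ?_⟩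
  have h_weight (k : ℕ) :
      ENNReal.ofReal (a ^ k) ^ r = ρ ^ k * ENNReal.ofReal (a ^ k) ^ p.toReal := by
    rw [← ENNReal.ofReal_pow (by positivity), ENNReal.ofReal_rpow_of_pos (by positivity),
      ENNReal.ofReal_rpow_of_pos (by positivity), ← ENNReal.ofReal_mul (by positivity)]
    simp only [← Real.rpow_natCast, ← Real.rpow_mul ha.le, ← Real.rpow_add ha]
    ring_nf
  calc lorentzGauge p q D
      ≤ lorentzGauge p q (fun t =>
          K * ∑' k, ρ ^ k * (ENNReal.ofReal (a ^ k) ^ p.toReal * E (a ^ k * t))) := by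
        refine lorentzGauge_mono fun t ht => (h t ht).trans_eq ?_
        simp only [h_weight, mul_assoc]
    _ ≤ K ^ (1 / p.toReal) * (C * ⨆ k : ℕ,
          lorentzGauge p q (fun t => ENNReal.ofReal (a ^ k) ^ p.toReal * E (a ^ k * t))) := by
        rw [lorentzGauge_const_mul hq₀ hK]
        gcongr
        exact h_tsum _ fun k => by fun_prop
    _ = K ^ (1 / p.toReal) * C * lorentzGauge p q E := by
        simp only [lorentzGauge_rpow_mul_comp_mul_left hp₀ hp hq₀ (pow_pos ha _), ciSup_const,
          mul_assoc]

end LorentzGauge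

section LorentzSlices

variable {X Y E : Type*} [MeasurableSpace X] [MeasurableSpace Y] {μ : Measure X} {ν : Measure Y}
  [TopologicalSpace E] [ContinuousENorm E] {p q r : ℝ≥0∞}

lemma lorentzNorm_mono_ae {F G : X → ℝ≥0∞} (h : ∀ᵐ x ∂μ, F x ≤ G x) :
    lorentzNorm μ p q F ≤ lorentzNorm μ p q G :=
  lorentzGauge_mono fun t _ => distFn_mono_ae h t

lemma lorentzNorm_comp_measurePreserving {φ : Y → X} (hφ : MeasurePreserving φ ν μ)
    {F : X → ℝ≥0∞} (hF : AEMeasurable F μ) :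
    lorentzNorm ν p q (F ∘ φ) = lorentzNorm μ p q F := by
  simp only [lorentzNorm_eq_lorentzGauge, funext (distFn_comp_measurePreserving hφ hF)]

variable (μ ν) [IsProbabilityMeasure ν]

theorem exists_lorentzNorm_eLpNorm_prodMk_left_le (hr₀ : r ≠ 0) (hrp : r < p) (hp : p ≠ ∞)
    (hq₀ : q ≠ 0) :
    ∃ C : ℝ≥0∞, C ≠ ∞ ∧ ∀ f : X × Y → E, AEStronglyMeasurable f (μ.prod ν) →
      lorentzNorm μ p q (fun x => eLpNorm (fun y => f (x, y)) r ν) ≤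
        C * lorentzNorm (μ.prod ν) p q (fun z => ‖f z‖ₑ) := by
  have h_exp : r.toReal - p.toReal < 0 := sub_neg.2 (ENNReal.toReal_strict_mono hp hrp)
  obtain ⟨C, hC, h_dilates⟩ := exists_lorentzGauge_le_of_le_tsum_dilates (p := p) (q := q)
    (K := 2 ^ r.toReal) hrp.ne_bot hp hq₀
    (ENNReal.rpow_ne_top_of_nonneg ENNReal.toReal_nonneg ENNReal.ofNat_ne_top) two_pos
    (Real.rpow_lt_one_of_one_lt_of_neg one_lt_two h_exp)
  refine ⟨ENNReal.ofReal (2 ^ r.toReal⁻¹) * C, ENNReal.mul_ne_top ENNReal.ofReal_ne_top hC,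
    fun f hf => ?_⟩
  rw [lorentzNorm_eq_lorentzGauge,
    ← ofReal_mul_lorentzGauge_comp_mul_left hq₀ (a := 2 ^ r.toReal⁻¹) (by positivity), mul_assoc]
  gcongr
  exact h_dilates _ _ (distFn_antitone _ _).measurable fun t ht =>
    distFn_eLpNorm_prodMk_left_le hf hr₀ hrp.ne_top ht

theorem exists_lorentzNorm_prod_le (hp₀ : p ≠ 0) (hpr : p < r) (hq₀ : q ≠ 0) :
    ∃ C : ℝ≥0∞, C ≠ ∞ ∧ ∀ f : X × Y → E, AEStronglyMeasurable f (μ.prod ν) →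
      lorentzNorm (μ.prod ν) p q (fun z => ‖f z‖ₑ) ≤
        C * lorentzNorm μ p q (fun x => eLpNorm (fun y => f (x, y)) r ν) := by
  obtain ⟨s, hps, hsr⟩ := exists_between hpr
  have h_exp : 0 < s.toReal - p.toReal := sub_pos.2 (ENNReal.toReal_strict_mono hsr.ne_top hps)
  obtain ⟨C, hC, h_dilates⟩ := exists_lorentzGauge_le_of_le_tsum_dilates (p := p) (q := q)
    (K := 2 ^ s.toReal) (a := 1 / 2) hp₀ hps.ne_top hq₀
    (ENNReal.rpow_ne_top_of_nonneg ENNReal.toReal_nonneg ENNReal.ofNat_ne_top) (by norm_num)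
    (Real.rpow_lt_one (by norm_num) (by norm_num) h_exp)
  refine ⟨C, hC, fun f hf => ?_⟩
  calc lorentzNorm (μ.prod ν) p q (fun z => ‖f z‖ₑ)
      ≤ C * lorentzNorm μ p q (fun x => eLpNorm (fun y => f (x, y)) s ν) :=
        h_dilates _ _ (distFn_antitone _ _).measurable fun t ht =>
          distFn_prod_le_tsum_distFn_eLpNorm hf hps.ne_bot hsr.ne_top ht
    _ ≤ C * lorentzNorm μ p q (fun x => eLpNorm (fun y => f (x, y)) r ν) := by
        gcongr
        exact lorentzNorm_mono_ae <| hf.prodMk_left.mono fun x hx =>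
          eLpNorm_le_eLpNorm_of_exponent_le hsr.le hx

end LorentzSlices

section Real

lemma lintegral_eq_tsum_lintegral_Ico_intCast_add (a : ℝ) (φ : ℝ → ℝ≥0∞) :
    ∫⁻ x, φ x = ∑' n : ℤ, ∫⁻ u in Set.Ico a (a + 1), φ (n + u) := by
  rw [← setLIntegral_univ, ← iUnion_Ico_add_intCast a,
    lintegral_iUnion (fun _ => measurableSet_Ico) (Set.pairwise_disjoint_Ico_add_intCast a)]
  congr with n
  rw [← (measurePreserving_add_left volume (n : ℝ)).setLIntegral_comp_preimage_emb
    (measurableEmbedding_addLeft (n : ℝ)), Set.preimage_const_add_Ico]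
  congr 3 <;> ring

lemma measurePreserving_intCast_add_Ico (a : ℝ) :
    MeasurePreserving (fun z : ℤ × ℝ => (z.1 : ℝ) + z.2)
      (Measure.count.prod (volume.restrict (Set.Ico a (a + 1)))) volume := by
  have h_meas : Measurable fun z : ℤ × ℝ => (z.1 : ℝ) + z.2 := by fun_prop
  refine ⟨h_meas, Measure.ext_of_lintegral _ fun φ hφ => ?_⟩
  rw [lintegral_map hφ h_meas, lintegral_prod _ (by fun_prop), lintegral_count,
    lintegral_eq_tsum_lintegral_Ico_intCast_add a]

instance isProbabilityMeasure_restrict_Ico_add_one (a : ℝ) :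
    IsProbabilityMeasure (volume.restrict (Set.Ico a (a + 1))) :=
  ⟨by simp⟩

end Real

lemma exists_pos_le_ofReal {C : ℝ≥0∞} (hC : C ≠ ∞) : ∃ c : ℝ, 0 < c ∧ C ≤ ENNReal.ofReal c := by
  obtain ⟨c, -, hCc, -⟩ := ENNReal.lt_iff_exists_real_btwn.1 hC.lt_top
  exact ⟨c, ENNReal.ofReal_pos.1 (hCc.trans_le' zero_le), hCc.le⟩

theorem stmt2_general {E : Type*} [TopologicalSpace E] [ContinuousENorm E] (p q p₀ p₁ : ℝ≥0∞)
    (hq : 0 < q) (hp₀ : 0 < p₀) (h₀ : p₀ < p) (h₁ : p < p₁) :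
    ∃ C₁ C₂ : ℝ, 0 < C₁ ∧ 0 < C₂ ∧ ∀ f : ℝ → E, AEStronglyMeasurable f volume →
      (ENNReal.ofReal C₁ * lorentzNorm Measure.count p q
          (fun n : ℤ => eLpNorm (fun u : ℝ => f ((n : ℝ) + u)) p₀
            (volume.restrict (Set.Ico (-(1/2) : ℝ) (1/2))))
        ≤ lorentzNorm volume p q (fun x => ‖f x‖ₑ)) ∧
      lorentzNorm volume p q (fun x => ‖f x‖ₑ)
        ≤ ENNReal.ofReal C₂ * lorentzNorm Measure.count p q
            (fun n : ℤ => eLpNorm (fun u : ℝ => f ((n : ℝ) + u)) p₁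
              (volume.restrict (Set.Ico (-(1/2) : ℝ) (1/2)))) := by
  rw [show Set.Ico (-(1/2) : ℝ) (1/2) = Set.Ico (-(1/2)) (-(1/2) + 1) by norm_num]
  set ν : Measure ℝ := volume.restrict (Set.Ico (-(1/2)) (-(1/2) + 1))
  have h_unfold := measurePreserving_intCast_add_Ico (-(1/2))
  obtain ⟨A, hA, h_lower⟩ := exists_lorentzNorm_eLpNorm_prodMk_left_le (E := E)
    (Measure.count : Measure ℤ) ν hp₀.ne' h₀ h₁.ne_top hq.ne'
  obtain ⟨B, hB, h_upper⟩ := exists_lorentzNorm_prod_le (E := E)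
    (Measure.count : Measure ℤ) ν h₀.ne_bot h₁ hq.ne'
  obtain ⟨a, ha, hAa⟩ := exists_pos_le_ofReal hA
  obtain ⟨b, hb, hBb⟩ := exists_pos_le_ofReal hB
  refine ⟨a⁻¹, b, inv_pos.2 ha, hb, fun f hf => ?_⟩
  have hf' := hf.comp_measurePreserving h_unfold
  rw [← lorentzNorm_comp_measurePreserving h_unfold hf.enorm]
  constructor
  · rw [ENNReal.ofReal_inv_of_pos ha, ← ENNReal.div_eq_inv_mul]
    refine ENNReal.div_le_of_le_mul' ((h_lower _ hf').trans ?_)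
    gcongr
    rfl
  · refine (h_upper _ hf').trans ?_
    gcongr
    rfl

/-- Relationship on average: the Lorentz norm of a Schwartz function is squeezed between the
`ℓ^{p,q}(ℤ)` norms of the sequences of local `L^{p₀}` and `L^{p₁}` norms on unit intervals. -/
theorem stmt2 (p q p₀ p₁ : ℝ≥0∞) (hp : 0 < p) (hq : 0 < q)
    (hp₀ : 0 < p₀) (h₀ : p₀ < p) (h₁ : p < p₁) :
    ∃ C₁ C₂ : ℝ, 0 < C₁ ∧ 0 < C₂ ∧ ∀ f : 𝓢(ℝ, ℂ),
      (ENNReal.ofReal C₁ * lorentzNorm Measure.count p q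
          (fun n : ℤ => eLpNorm (fun u : ℝ => f ((n : ℝ) + u)) p₀
            (volume.restrict (Set.Ico (-(1/2) : ℝ) (1/2))))
        ≤ lorentzNormC volume p q (fun x => f x)) ∧
      lorentzNormC volume p q (fun x => f x)
        ≤ ENNReal.ofReal C₂ * lorentzNorm Measure.count p q
            (fun n : ℤ => eLpNorm (fun u : ℝ => f ((n : ℝ) + u)) p₁
              (volume.restrict (Set.Ico (-(1/2) : ℝ) (1/2)))) := by
  obtain ⟨C₁, C₂, hC₁, hC₂, h⟩ := stmt2_general (E := ℂ) p q p₀ p₁ hq hp₀ h₀ h₁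
  exact ⟨C₁, C₂, hC₁, hC₂, fun f => h f f.continuous.aestronglyMeasurable⟩
end

section
/- Let m:ℝ²→ℂ be measurable and locally bounded, and let f,g be Schwartz functions on ℝ whose Fourier transforms have compact support. Then C_m(f,g) is a bounded continuous function on ℝ, and its Fourier transform, taken in the sense of tempered distributions, is the compactly supported integrable function ν ↦ ∫_ℝ f̂(ξ) ĝ(ν−ξ) m(ξ,ν−ξ) dξ. -/
/-!
Substituting `η = ν - ξ` collects the frequency pairs `(ξ, η)` with the same sum `ν`, and Fubini's
theorem exhibits `C_m(f,g)` as the inverse Fourier transform of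
`h ν = ∫ f̂(ξ) ĝ(ν - ξ) m(ξ, ν - ξ) dξ`. Since `f̂ ⊗ ĝ` is continuous with compact support and
`m` is locally integrable, `h` is integrable with compact support. Hence `𝓕⁻ h` is bounded and
continuous, and `∫ 𝓕⁻ h * 𝓕 φ = ∫ h * φ` is self-adjointness of `𝓕⁻` together with Fourier inversion
for the test function `φ`.
-/

open MeasureTheory Complex SchwartzMap Filter
open scoped FourierTransform ENNReal NNReal Real

section AntidiagonalIntegral

variable {G E : Type*} [AddCommGroup G] [MeasurableSpace G] [NormedAddCommGroup E]
  {μ ν : Measure G} {H : G × G → E}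

theorem integrable_comp_prod_sub [MeasurableAdd₂ G] [MeasurableNeg G] [SFinite μ] [SFinite ν]
    [ν.IsAddRightInvariant] (hH : Integrable H (μ.prod ν)) :
    Integrable (fun z : G × G => H (z.1, z.2 - z.1)) (μ.prod ν) :=
  (measurePreserving_prod_sub μ ν).integrable_comp_of_integrable hH

variable [NormedSpace ℝ E]

/-- The integral of `H` over each antidiagonal `{(ξ, η) | ξ + η = y}`, parametrized by its first
coordinate `ξ`. As a function of `y` it is the density of the pushforward under addition of the
measure with density `H`; the case `H (ξ, η) = F ξ * K η` is the convolution of `F` and `K`. -/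
noncomputable def antidiagonalIntegral (μ : Measure G) (H : G × G → E) (y : G) : E :=
  ∫ ξ, H (ξ, y - ξ) ∂μ

theorem hasCompactSupport_antidiagonalIntegral [TopologicalSpace G] [ContinuousAdd G]
    [R1Space G] (hH : HasCompactSupport H) :
    HasCompactSupport (antidiagonalIntegral μ H) := by
  refine HasCompactSupport.intro (hH.isCompact.image continuous_add) fun y hy => ?_
  have h_fiber (ξ : G) : H (ξ, y - ξ) = 0 :=
    image_eq_zero_of_notMem_tsupport fun hξ => hy ⟨_, hξ, add_sub_cancel ξ y⟩
  simp only [antidiagonalIntegral, h_fiber, integral_zero]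

variable [MeasurableAdd₂ G] [MeasurableNeg G] [SFinite μ] [SFinite ν] [ν.IsAddRightInvariant]

theorem integrable_antidiagonalIntegral (hH : Integrable H (μ.prod ν)) :
    Integrable (antidiagonalIntegral μ H) ν :=
  (integrable_comp_prod_sub hH).integral_prod_right

theorem integral_antidiagonalIntegral (hH : Integrable H (μ.prod ν)) :
    ∫ y, antidiagonalIntegral μ H y ∂ν = ∫ ξ, ∫ η, H (ξ, η) ∂ν ∂μ :=
  calc
    ∫ y, antidiagonalIntegral μ H y ∂ν = ∫ ξ, ∫ y, H (ξ, y - ξ) ∂ν ∂μ :=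
      (integral_integral_swap (integrable_comp_prod_sub hH)).symm
    _ = ∫ ξ, ∫ η, H (ξ, η) ∂ν ∂μ :=
      integral_congr_ae <| .of_forall fun ξ => integral_sub_right_eq_self (fun η => H (ξ, η)) ξ

theorem integral_smul_antidiagonalIntegral {𝕜 : Type*} [NormedField 𝕜] [NormedSpace 𝕜 E]
    [SMulCommClass ℝ 𝕜 E] (φ : G → 𝕜)
    (hH : Integrable (fun z : G × G => φ (z.1 + z.2) • H z) (μ.prod ν)) :
    ∫ y, φ y • antidiagonalIntegral μ H y ∂ν = ∫ ξ, ∫ η, φ (ξ + η) • H (ξ, η) ∂ν ∂μ := by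
  rw [← integral_antidiagonalIntegral hH]
  simp only [antidiagonalIntegral, add_sub_cancel, integral_smul]

end AntidiagonalIntegral

section FourierInv

variable {V E : Type*} [NormedAddCommGroup V] [InnerProductSpace ℝ V] [FiniteDimensional ℝ V]
  [MeasurableSpace V] [BorelSpace V] [NormedAddCommGroup E] [NormedSpace ℂ E]

theorem norm_fourierInv_le_integral_norm (h : V → E) (x : V) : ‖𝓕⁻ h x‖ ≤ ∫ v, ‖h v‖ :=
  VectorFourier.norm_fourierIntegral_le_integral_norm 𝐞 volume (-innerₗ V) h x

theorem continuous_fourierInv {h : V → E} (hh : Integrable h) : Continuous (𝓕⁻ h) :=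
  VectorFourier.fourierIntegral_continuous (L := -innerₗ V) Real.continuous_fourierChar
    continuous_inner.neg hh

theorem integral_fourierInv_smul_eq [CompleteSpace E] {h : V → ℂ} {k : V → E}
    (hh : Integrable h) (hk : Integrable k) :
    ∫ x, 𝓕⁻ h x • k x = ∫ v, h v • 𝓕⁻ k v := by
  have h_flip : (-innerₗ V).flip = -innerₗ V := by
    ext v w
    simp [real_inner_comm]
  have h_adjoint := VectorFourier.integral_fourierIntegral_smul_eq_flip (L := -innerₗ V)
    Real.continuous_fourierChar continuous_inner.neg hh hk
  rwa [h_flip] at h_adjoint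

theorem integral_fourierInv_smul_fourier [CompleteSpace E] {h : V → ℂ} (hh : Integrable h)
    (φ : 𝓢(V, E)) :
    ∫ x, 𝓕⁻ h x • 𝓕 (φ : V → E) x = ∫ v, h v • φ v := by
  rw [integral_fourierInv_smul_eq hh (𝓕 φ).integrable,
    φ.continuous.fourierInv_fourier_eq φ.integrable (𝓕 φ).integrable]

theorem fourierInv_antidiagonalIntegral {H : V × V → E} (hH : Integrable H (volume.prod volume))
    (x : V) :
    𝓕⁻ (antidiagonalIntegral volume H) x = ∫ ξ, ∫ η, (𝐞 (inner ℝ (ξ + η) x) : ℂ) • H (ξ, η) := by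
  have h_phase : Continuous fun z : V × V => (𝐞 (inner ℝ (z.1 + z.2) x) : ℂ) :=
    continuous_subtype_val.comp (Real.continuous_fourierChar.comp (by fun_prop))
  rw [Real.fourierInv_eq]
  exact integral_smul_antidiagonalIntegral (fun y => (𝐞 (inner ℝ y x) : ℂ)) <|
    hH.bdd_smul 1 h_phase.aestronglyMeasurable (.of_forall fun _ => (Circle.norm_coe _).le)

end FourierInv

section MultiplierDensity

theorem hasCompactSupport_mul_prod {X Y R : Type*} [TopologicalSpace X] [TopologicalSpace Y]
    [MulZeroClass R] {F : X → R} {G : Y → R} (hF : HasCompactSupport F)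
    (hG : HasCompactSupport G) : HasCompactSupport fun z : X × Y => F z.1 * G z.2 := by
  refine .intro' (hF.isCompact.prod hG.isCompact)
    ((isClosed_tsupport F).prod (isClosed_tsupport G)) fun z hz => ?_
  by_contra h_ne
  exact hz ⟨subset_tsupport F (left_ne_zero_of_mul h_ne),
    subset_tsupport G (right_ne_zero_of_mul h_ne)⟩

theorem LocallyBounded.locallyIntegrable {m : ℝ × ℝ → ℂ} (hloc : LocallyBounded m)
    {μ : Measure (ℝ × ℝ)} [IsFiniteMeasureOnCompacts μ] (hm : AEStronglyMeasurable m μ) :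
    LocallyIntegrable m μ := by
  refine locallyIntegrable_iff.2 fun K hK => ?_
  obtain ⟨C, hC⟩ := hloc K hK
  exact Measure.integrableOn_of_bounded hK.measure_lt_top.ne hm
    (ae_restrict_of_forall_mem hK.measurableSet hC)

/-- The frequency-side density `f̂(ξ) ĝ(η) m(ξ, η)` of `C_m(f,g)`. -/
noncomputable def multiplierDensity (m : ℝ × ℝ → ℂ) (f g : 𝓢(ℝ, ℂ)) (z : ℝ × ℝ) : ℂ :=
  𝓕 (f : ℝ → ℂ) z.1 * 𝓕 (g : ℝ → ℂ) z.2 * m z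

variable {m : ℝ × ℝ → ℂ} {f g : 𝓢(ℝ, ℂ)}

theorem hasCompactSupport_multiplierDensity
    (hf : HasCompactSupport (𝓕 (f : ℝ → ℂ))) (hg : HasCompactSupport (𝓕 (g : ℝ → ℂ))) :
    HasCompactSupport (multiplierDensity m f g) :=
  (hasCompactSupport_mul_prod hf hg).mul_right

theorem integrable_multiplierDensity (hm : LocallyIntegrable m)
    (hf : HasCompactSupport (𝓕 (f : ℝ → ℂ))) (hg : HasCompactSupport (𝓕 (g : ℝ → ℂ))) :
    Integrable (multiplierDensity m f g) :=
  hm.integrable_smul_left_of_hasCompactSupport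
    (((𝓕 f).continuous.comp continuous_fst).mul ((𝓕 g).continuous.comp continuous_snd))
    (hasCompactSupport_mul_prod hf hg)

theorem Cm_eq_fourierInv (hm : Integrable (multiplierDensity m f g)) :
    Cm m f g = 𝓕⁻ (antidiagonalIntegral volume (multiplierDensity m f g)) := by
  funext x
  rw [fourierInv_antidiagonalIntegral hm, Cm]
  congr! 4 with ξ η
  have h_phase : (𝐞 (inner ℝ (ξ + η) x) : ℂ) =
      Complex.exp (2 * Real.pi * Complex.I * (x : ℂ) * ((ξ : ℂ) + (η : ℂ))) := by
    rw [Real.fourierChar_apply, RCLike.inner_apply, conj_trivial]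
    push_cast
    ring_nf
  rw [h_phase, smul_eq_mul, mul_comm, multiplierDensity]

end MultiplierDensity

theorem stmt11_general (m : ℝ × ℝ → ℂ) (hm : LocallyIntegrable m)
    (f g : 𝓢(ℝ, ℂ)) (hf : HasCompactSupport (𝓕 (f : ℝ → ℂ)))
    (hg : HasCompactSupport (𝓕 (g : ℝ → ℂ))) :
    Continuous (Cm m f g) ∧
    (∃ C : ℝ, ∀ x : ℝ, ‖Cm m f g x‖ ≤ C) ∧
    HasCompactSupport
      (fun ν : ℝ => ∫ ξ : ℝ, 𝓕 (f : ℝ → ℂ) ξ * 𝓕 (g : ℝ → ℂ) (ν - ξ) * m (ξ, ν - ξ)) ∧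
    Integrable
      (fun ν : ℝ => ∫ ξ : ℝ, 𝓕 (f : ℝ → ℂ) ξ * 𝓕 (g : ℝ → ℂ) (ν - ξ) * m (ξ, ν - ξ)) ∧
    ∀ φ : 𝓢(ℝ, ℂ),
      ∫ x : ℝ, Cm m f g x * 𝓕 (φ : ℝ → ℂ) x =
        ∫ ν : ℝ, (∫ ξ : ℝ, 𝓕 (f : ℝ → ℂ) ξ * 𝓕 (g : ℝ → ℂ) (ν - ξ) * m (ξ, ν - ξ)) * φ ν := by
  have h_multiplier : Integrable (multiplierDensity m f g) (volume.prod volume) :=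
    integrable_multiplierDensity hm hf hg
  have h_density : Integrable (antidiagonalIntegral volume (multiplierDensity m f g)) :=
    integrable_antidiagonalIntegral h_multiplier
  rw [Cm_eq_fourierInv h_multiplier]
  exact ⟨continuous_fourierInv h_density, ⟨_, norm_fourierInv_le_integral_norm _⟩,
    hasCompactSupport_antidiagonalIntegral (hasCompactSupport_multiplierDensity hf hg),
    h_density, integral_fourierInv_smul_fourier h_density⟩

/-- `C_m(f,g)` is a bounded continuous function whose distributional Fourier transform is the
compactly supported integrable function `ν ↦ ∫ f̂(ξ) ĝ(ν−ξ) m(ξ, ν−ξ) dξ`. -/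
theorem stmt11 (m : ℝ × ℝ → ℂ) (hm : Measurable m) (hloc : LocallyBounded m)
    (f g : 𝓢(ℝ, ℂ)) (hf : HasCompactSupport (𝓕 (f : ℝ → ℂ)))
    (hg : HasCompactSupport (𝓕 (g : ℝ → ℂ))) :
    Continuous (Cm m f g) ∧
    (∃ C : ℝ, ∀ x : ℝ, ‖Cm m f g x‖ ≤ C) ∧
    HasCompactSupport
      (fun ν : ℝ => ∫ ξ : ℝ, 𝓕 (f : ℝ → ℂ) ξ * 𝓕 (g : ℝ → ℂ) (ν - ξ) * m (ξ, ν - ξ)) ∧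
    Integrable
      (fun ν : ℝ => ∫ ξ : ℝ, 𝓕 (f : ℝ → ℂ) ξ * 𝓕 (g : ℝ → ℂ) (ν - ξ) * m (ξ, ν - ξ)) ∧
    ∀ φ : 𝓢(ℝ, ℂ),
      ∫ x : ℝ, Cm m f g x * 𝓕 (φ : ℝ → ℂ) x =
        ∫ ν : ℝ, (∫ ξ : ℝ, 𝓕 (f : ℝ → ℂ) ξ * 𝓕 (g : ℝ → ℂ) (ν - ξ) * m (ξ, ν - ξ)) * φ ν :=
  stmt11_general m (hloc.locallyIntegrable hm.aestronglyMeasurable) f g hf hg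
end
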